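/- Fix ε > 0. There exists a constant C > 0 such that for all sufficiently large X, the number of primes p ≤ X with τ(p−1) ≥ (log X)^{1+ε/2} is at most C · π(X) · (log X)^{−ε/2}; equivalently, the inequality τ(p−1) < (log X)^{1+ε/2} holds for π(X)(1 + O((log X)^{−ε/2})) primes p ≤ X. -/

import Mathlib

open Finset
open scoped Classical

/-!
By Markov's inequality and Chebyshev's bound `π(X) ≫ X / log X`, it suffices to show
`∑_{p ≤ X} τ(p - 1) ≪ X`, the upper bound in the Titchmarsh divisor problem. At least half of the
divisors of `p - 1` are at most `√X`, so this sum is at most twice `∑_{d ≤ √X} π(X; d, 1)`. Sifting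
the progression `1` mod `d` by the primes up to `R = X ^ (1 / 8)` with Selberg's sieve gives
`π(X; d, 1) ≪ X / (d S_d) + R ^ 4`, where `S_d` is the sum of `1 / m` over the squarefree `m ≤ R`
coprime to `d`. Every `n ≤ R` is `l s² m` with `l ∣ d` and such an `m`, so
`log R ≪ S_d ∑_{l ∣ d} 1 / l`, and the factor `∑_{l ∣ d} 1 / l` is bounded on average over `d` with
the weights `1 / d`.
-/

/-! ### The Selberg sieve -/

section SelbergSieve

open scoped ArithmeticFunction.Moebius

lemma sum_moebius_divisors_filter_dvd {l k : ℕ} (hk : Squarefree k) :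
    ∑ d ∈ k.divisors with l ∣ d, μ d = if k = l then μ l else 0 := by
  by_cases hlk : l ∣ k
  · obtain ⟨m, rfl⟩ := hlk
    have hl : l ≠ 0 := left_ne_zero_of_mul hk.ne_zero
    have hcop : l.Coprime m := Nat.coprime_of_squarefree_mul hk
    have himage : {d ∈ (l * m).divisors | l ∣ d} = m.divisors.image (l * ·) := by
      ext d
      simp only [mem_filter, mem_image, Nat.mem_divisors]
      constructor
      · rintro ⟨⟨hd, -⟩, j, rfl⟩
        exact ⟨j, ⟨Nat.dvd_of_mul_dvd_mul_left hl.bot_lt hd, right_ne_zero_of_mul hk.ne_zero⟩, rfl⟩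
      · rintro ⟨j, ⟨hj, -⟩, rfl⟩
        exact ⟨⟨mul_dvd_mul_left l hj, hk.ne_zero⟩, dvd_mul_right l j⟩
    calc ∑ d ∈ (l * m).divisors with l ∣ d, μ d = ∑ j ∈ m.divisors, μ (l * j) := by
          rw [himage, sum_image (mul_right_injective₀ hl).injOn]
      _ = μ l * ∑ j ∈ m.divisors, μ j := by
          rw [mul_sum]
          refine sum_congr rfl fun j hj => ?_
          exact ArithmeticFunction.isMultiplicative_moebius.map_mul_of_coprime
            (hcop.coprime_dvd_right (Nat.dvd_of_mem_divisors hj))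
      _ = if l * m = l then μ l else 0 := by
          rw [← ArithmeticFunction.coe_mul_zeta_apply, ArithmeticFunction.moebius_mul_coe_zeta,
            ArithmeticFunction.one_apply]
          simp [hl]
  · rw [if_neg (by rintro rfl; exact hlk dvd_rfl)]
    refine sum_eq_zero fun d hd => ?_
    simp only [mem_filter, Nat.mem_divisors] at hd
    exact absurd (hd.2.trans hd.1.1) hlk

variable (s : BoundingSieve) (D : Finset ℕ)

/-- The weights of Selberg's upper bound sieve, supported on a set `D` of divisors of the sifting
modulus. With `g = s.selbergTerms` they make the diagonalised quadratic form concentrate on `D`,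
where its variables are proportional to `μ l * g l`. -/
noncomputable def selbergWeight (e : ℕ) : ℝ :=
  (s.nu e)⁻¹ * μ e * ((∑ k ∈ D with e ∣ k, s.selbergTerms k) / ∑ k ∈ D, s.selbergTerms k)

variable {s D}

lemma sum_selbergTerms_pos (hD : D ⊆ s.prodPrimes.divisors) (hne : D.Nonempty) :
    0 < ∑ k ∈ D, s.selbergTerms k :=
  sum_pos (fun _ hk => BoundingSieve.selbergTerms_pos (Nat.dvd_of_mem_divisors (hD hk))) hne

lemma selbergWeight_one (hD : D ⊆ s.prodPrimes.divisors) (hne : D.Nonempty) :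
    selbergWeight s D 1 = 1 := by
  simp [selbergWeight, s.nu_mult.map_one, (sum_selbergTerms_pos hD hne).ne']

lemma abs_selbergWeight_le (hD : D ⊆ s.prodPrimes.divisors) {e : ℕ} (he : e ∣ s.prodPrimes) :
    |selbergWeight s D e| ≤ (s.nu e)⁻¹ := by
  have hnu : 0 < s.nu e := BoundingSieve.nu_pos_of_dvd_prodPrimes he
  have hg : ∀ k ∈ D, 0 ≤ s.selbergTerms k := fun k hk =>
    (BoundingSieve.selbergTerms_pos (Nat.dvd_of_mem_divisors (hD hk))).le
  have hmu : |(μ e : ℝ)| ≤ 1 := mod_cast ArithmeticFunction.abs_moebius_le_one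
  have hratio : |(∑ k ∈ D with e ∣ k, s.selbergTerms k) / ∑ k ∈ D, s.selbergTerms k| ≤ 1 := by
    rw [abs_of_nonneg (div_nonneg (sum_nonneg fun k hk => hg k (mem_of_mem_filter k hk))
      (sum_nonneg hg))]
    exact div_le_one_of_le₀
      (sum_le_sum_of_subset_of_nonneg (filter_subset _ _) fun k hk _ => hg k hk) (sum_nonneg hg)
  calc |selbergWeight s D e| ≤ (s.nu e)⁻¹ * 1 * 1 := by
        rw [selbergWeight, abs_mul, abs_mul, abs_of_pos (inv_pos.2 hnu)]
        gcongr
    _ = (s.nu e)⁻¹ := by ring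

lemma selbergWeight_eq_zero (hdvd : ∀ k ∈ D, ∀ e, e ∣ k → e ∈ D) {e : ℕ} (he : e ∉ D) :
    selbergWeight s D e = 0 := by
  have hempty : {k ∈ D | e ∣ k} = ∅ := filter_false_of_mem fun k hk hek => he (hdvd k hk e hek)
  simp [selbergWeight, hempty]

lemma sum_nu_mul_selbergWeight (hD : D ⊆ s.prodPrimes.divisors) (l : ℕ) :
    ∑ e ∈ s.prodPrimes.divisors, (if l ∣ e then s.nu e * selbergWeight s D e else 0) =
      if l ∈ D then μ l * s.selbergTerms l / ∑ k ∈ D, s.selbergTerms k else 0 := by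
  set G := ∑ k ∈ D, s.selbergTerms k with hG
  have hterm : ∀ e ∈ s.prodPrimes.divisors,
      (if l ∣ e then s.nu e * selbergWeight s D e else 0) =
        ∑ k ∈ D, if e ∣ k ∧ l ∣ e then s.selbergTerms k / G * μ e else 0 := by
    intro e he
    have hnu := BoundingSieve.nu_ne_zero (Nat.dvd_of_mem_divisors he)
    split_ifs with hle
    · simp only [hle, and_true, ← sum_filter, ← sum_mul, ← sum_div]
      rw [selbergWeight, ← hG]
      field_simp
    · simp [hle]
  have hinner : ∀ k ∈ D, ∑ e ∈ s.prodPrimes.divisors,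
      (if e ∣ k ∧ l ∣ e then s.selbergTerms k / G * μ e else 0) =
        if k = l then μ l * s.selbergTerms l / G else 0 := by
    intro k hk
    have hkP := Nat.dvd_of_mem_divisors (hD hk)
    rw [← sum_filter, ← mul_sum, ← filter_filter,
      Nat.divisors_filter_dvd_of_dvd BoundingSieve.prodPrimes_ne_zero hkP, ← Int.cast_sum,
      sum_moebius_divisors_filter_dvd (BoundingSieve.squarefree_of_dvd_prodPrimes hkP)]
    split_ifs with h
    · subst h
      ring
    · simp
  rw [sum_congr rfl hterm, sum_comm, sum_congr rfl hinner, sum_ite_eq']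

lemma mainSum_lambdaSquared_selbergWeight (hD : D ⊆ s.prodPrimes.divisors) :
    s.mainSum (BoundingSieve.lambdaSquared (selbergWeight s D)) =
      (∑ k ∈ D, s.selbergTerms k)⁻¹ := by
  rw [BoundingSieve.mainSum_lambdaSquared_eq_sum_mul_sum_sq]
  set G := ∑ k ∈ D, s.selbergTerms k with hG
  have hterm : ∀ l ∈ D, (s.selbergTerms l)⁻¹ * (μ l * s.selbergTerms l / G) ^ 2 =
      s.selbergTerms l / G ^ 2 := by
    intro l hl
    have hlP := Nat.dvd_of_mem_divisors (hD hl)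
    have hg := (BoundingSieve.selbergTerms_pos hlP).ne'
    have hmu : (μ l : ℝ) ^ 2 = 1 := mod_cast
      ArithmeticFunction.moebius_sq_eq_one_of_squarefree
        (BoundingSieve.squarefree_of_dvd_prodPrimes hlP)
    rw [div_pow, mul_pow, hmu]
    field_simp
  calc ∑ l ∈ s.prodPrimes.divisors, (s.selbergTerms l)⁻¹ *
        (∑ d ∈ s.prodPrimes.divisors, if l ∣ d then s.nu d * selbergWeight s D d else 0) ^ 2
      = ∑ l ∈ s.prodPrimes.divisors,
          if l ∈ D then (s.selbergTerms l)⁻¹ * (μ l * s.selbergTerms l / G) ^ 2 else 0 := by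
        refine sum_congr rfl fun l _ => ?_
        rw [sum_nu_mul_selbergWeight hD, ite_pow, mul_ite, zero_pow two_ne_zero, mul_zero]
    _ = ∑ l ∈ D, s.selbergTerms l / G ^ 2 := by
        rw [← sum_filter, filter_mem_eq_inter, inter_eq_right.2 hD, sum_congr rfl hterm]
    _ = G⁻¹ := by
        rw [← sum_div, ← hG, sq, div_self_mul_self']

lemma errSum_lambdaSquared_le (w : ℕ → ℝ) :
    s.errSum (BoundingSieve.lambdaSquared w) ≤
      ∑ a ∈ s.prodPrimes.divisors, ∑ b ∈ s.prodPrimes.divisors,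
        |w a| * |w b| * |s.rem (a.lcm b)| := by
  have hterm : ∀ d ∈ s.prodPrimes.divisors, |BoundingSieve.lambdaSquared w d| * |s.rem d| ≤
      ∑ a ∈ s.prodPrimes.divisors, ∑ b ∈ s.prodPrimes.divisors,
        if d = a.lcm b then |w a| * |w b| * |s.rem d| else 0 := by
    intro d hd
    have hsub : d.divisors ⊆ s.prodPrimes.divisors :=
      Nat.divisors_subset_of_dvd BoundingSieve.prodPrimes_ne_zero (Nat.dvd_of_mem_divisors hd)
    calc |BoundingSieve.lambdaSquared w d| * |s.rem d|
        ≤ (∑ a ∈ d.divisors, ∑ b ∈ d.divisors, |if d = a.lcm b then w a * w b else 0|) *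
            |s.rem d| := by
          gcongr
          exact (abs_sum_le_sum_abs _ _).trans (sum_le_sum fun _ _ => abs_sum_le_sum_abs _ _)
      _ = ∑ a ∈ d.divisors, ∑ b ∈ d.divisors,
            if d = a.lcm b then |w a| * |w b| * |s.rem d| else 0 := by
          simp only [sum_mul, apply_ite abs, abs_mul, abs_zero, ite_mul, zero_mul]
      _ ≤ _ := by
          refine (sum_le_sum fun a _ => sum_le_sum_of_subset_of_nonneg hsub ?_).trans
            (sum_le_sum_of_subset_of_nonneg hsub ?_)
          · intros; positivity
          · intros; positivity
  refine (sum_le_sum hterm).trans_eq ?_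
  rw [sum_comm]
  refine sum_congr rfl fun a ha => ?_
  rw [sum_comm]
  refine sum_congr rfl fun b hb => ?_
  have hlcm : a.lcm b ∈ s.prodPrimes.divisors := Nat.mem_divisors.2
    ⟨Nat.lcm_dvd (Nat.dvd_of_mem_divisors ha) (Nat.dvd_of_mem_divisors hb),
      BoundingSieve.prodPrimes_ne_zero⟩
  rw [sum_ite_eq_of_mem' _ _ _ hlcm]

theorem siftedSum_le_totalMass_div_sum_selbergTerms (hD : D ⊆ s.prodPrimes.divisors)
    (hne : D.Nonempty) (hdvd : ∀ k ∈ D, ∀ e, e ∣ k → e ∈ D) :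
    s.siftedSum ≤ s.totalMass / ∑ k ∈ D, s.selbergTerms k +
      ∑ a ∈ D, ∑ b ∈ D, (s.nu a)⁻¹ * (s.nu b)⁻¹ * |s.rem (a.lcm b)| := by
  have hle : ∀ a ∈ D, |selbergWeight s D a| ≤ (s.nu a)⁻¹ := fun a ha =>
    abs_selbergWeight_le hD (Nat.dvd_of_mem_divisors (hD ha))
  have herr : s.errSum (BoundingSieve.lambdaSquared (selbergWeight s D)) ≤
      ∑ a ∈ D, ∑ b ∈ D, (s.nu a)⁻¹ * (s.nu b)⁻¹ * |s.rem (a.lcm b)| :=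
    calc _ ≤ ∑ a ∈ s.prodPrimes.divisors, ∑ b ∈ s.prodPrimes.divisors,
          |selbergWeight s D a| * |selbergWeight s D b| * |s.rem (a.lcm b)| :=
          errSum_lambdaSquared_le _
      _ = ∑ a ∈ D, ∑ b ∈ D,
          |selbergWeight s D a| * |selbergWeight s D b| * |s.rem (a.lcm b)| := by
          rw [← sum_subset hD fun a _ ha => by simp [selbergWeight_eq_zero hdvd ha]]
          refine sum_congr rfl fun a _ => ?_
          rw [← sum_subset hD fun b _ hb => by simp [selbergWeight_eq_zero hdvd hb]]
      _ ≤ _ := by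
          gcongr with a ha b hb
          · exact (abs_nonneg _).trans (hle a ha)
          · exact hle a ha
          · exact hle b hb
  calc s.siftedSum ≤ s.totalMass * s.mainSum (BoundingSieve.lambdaSquared (selbergWeight s D)) +
        s.errSum (BoundingSieve.lambdaSquared (selbergWeight s D)) :=
        BoundingSieve.siftedSum_le_mainSum_errSum_of_upperMoebius _
          (BoundingSieve.upperMoebius_lambdaSquared _ (selbergWeight_one hD hne))
    _ ≤ _ := by
        rw [mainSum_lambdaSquared_selbergWeight hD, ← div_eq_mul_inv]
        gcongr

lemma nu_le_selbergTerms {l : ℕ} (hl : l ∣ s.prodPrimes) :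
    s.nu l ≤ s.selbergTerms l := by
  rw [BoundingSieve.selbergTerms_apply]
  refine le_mul_of_one_le_right (BoundingSieve.nu_pos_of_dvd_prodPrimes hl).le
    (one_le_prod fun p hp => ?_)
  have hpl := Nat.dvd_of_mem_primeFactors hp
  have hprime := Nat.prime_of_mem_primeFactors hp
  have hpos := s.nu_pos_of_prime p hprime (hpl.trans hl)
  have hlt := s.nu_lt_one_of_prime p hprime (hpl.trans hl)
  exact (one_le_inv₀ (by linarith)).2 (by linarith)

end SelbergSieve

/-! ### Primes in arithmetic progressions -/

lemma abs_card_Ioc_filter_modEq_sub_le {r : ℕ} (hr : 0 < r) (N v : ℕ) :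
    |(#{n ∈ Ioc 0 N | n ≡ v [MOD r]} : ℝ) - N / r| ≤ 1 := by
  have hcard := Nat.Ioc_filter_modEq_card 0 N hr v
  set x : ℚ := ((N : ℚ) - v) / r with hx
  set y : ℚ := (((0 : ℕ) : ℚ) - v) / r with hy
  have hdiff : (N : ℚ) / r = x - y := by rw [hx, hy, Nat.cast_zero]; ring
  have hyx : y ≤ x := by
    rw [hx, hy]
    gcongr
    exact N.zero_le
  rw [max_eq_left (sub_nonneg.2 (Int.floor_mono hyx))] at hcard
  have key : |(#{n ∈ Ioc 0 N | n ≡ v [MOD r]} : ℚ) - N / r| ≤ 1 := by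
    have hcast : (#{n ∈ Ioc 0 N | n ≡ v [MOD r]} : ℚ) = ⌊x⌋ - ⌊y⌋ := mod_cast hcard
    rw [hcast, hdiff, abs_le]
    constructor <;>
      linarith [Int.floor_le x, Int.floor_le y, Int.lt_floor_add_one x, Int.lt_floor_add_one y]
  have hreal := (Rat.cast_le (K := ℝ)).2 key
  push_cast at hreal
  exact hreal

lemma abs_card_Ioc_filter_modEq_and_dvd_sub_le {d e : ℕ} (hd : 0 < d) (he : 0 < e)
    (hde : d.Coprime e) (N a : ℕ) :
    |(#{n ∈ Ioc 0 N | n ≡ a [MOD d] ∧ e ∣ n} : ℝ) - N / (d * e)| ≤ 1 := by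
  obtain ⟨v, hva, hv0⟩ := Nat.chineseRemainder hde a 0
  have hiff : ∀ n, n ≡ a [MOD d] ∧ e ∣ n ↔ n ≡ v [MOD d * e] := fun n => by
    rw [← Nat.modEq_and_modEq_iff_modEq_mul hde, ← Nat.modEq_zero_iff_dvd]
    exact and_congr ⟨(·.trans hva.symm), (·.trans hva)⟩ ⟨(·.trans hv0.symm), (·.trans hv0)⟩
  simp only [hiff]
  exact_mod_cast abs_card_Ioc_filter_modEq_sub_le (Nat.mul_pos hd he) N v

/-- The arithmetic function `n ↦ 1 / n`, with value `0` at `0`: the density function of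
`progressionSieve`. -/
noncomputable def reciprocal : ArithmeticFunction ℝ :=
  ⟨fun n => (n : ℝ)⁻¹, by simp⟩

lemma reciprocal_apply (n : ℕ) : reciprocal n = (n : ℝ)⁻¹ :=
  rfl

lemma isMultiplicative_reciprocal : reciprocal.IsMultiplicative :=
  ⟨by simp [reciprocal_apply], fun _ => by simp [reciprocal_apply, mul_comm]⟩

/-- The product of the primes up to `R` that do not divide `d`: the modulus for sifting progressions
mod `d`. -/
noncomputable def coprimePrimorial (d R : ℕ) : ℕ :=
  ∏ p ∈ R.primesLE with ¬ p ∣ d, p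

lemma squarefree_coprimePrimorial (d R : ℕ) : Squarefree (coprimePrimorial d R) := by
  have hprime : ∀ p ∈ {p ∈ R.primesLE | ¬ p ∣ d}, p.Prime := fun p hp =>
    (Nat.mem_primesLE.1 (mem_of_mem_filter p hp)).2
  refine squarefree_prod_of_pairwise_isCoprime (fun p hp q hq hpq => ?_) fun p hp =>
    (hprime p hp).squarefree
  exact Nat.coprime_iff_isRelPrime.1 ((Nat.coprime_primes (hprime p hp) (hprime q hq)).2 hpq)

lemma coprime_coprimePrimorial (d R : ℕ) : d.Coprime (coprimePrimorial d R) :=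
  Nat.Coprime.prod_right fun p hp => by
    obtain ⟨hpR, hpd⟩ := mem_filter.1 hp
    exact ((Nat.mem_primesLE.1 hpR).2.coprime_iff_not_dvd.2 hpd).symm

lemma dvd_coprimePrimorial {d R m : ℕ} (hm : Squarefree m) (hmd : m.Coprime d) (hmR : m ≤ R) :
    m ∣ coprimePrimorial d R := by
  rw [← Nat.prod_primeFactors_of_squarefree hm]
  refine prod_dvd_prod_of_subset _ _ _ fun p hp => ?_
  have hprime := Nat.prime_of_mem_primeFactors hp
  refine mem_filter.2 ⟨Nat.mem_primesLE.2 ⟨(Nat.le_of_mem_primeFactors hp).trans hmR, hprime⟩, ?_⟩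
  exact hprime.coprime_iff_not_dvd.1
    (hmd.coprime_dvd_left (Nat.dvd_of_mem_primeFactors hp))

lemma coprimePrimorial_coprime_of_prime {d R p : ℕ} (hp : p.Prime) (hpR : R < p) :
    (coprimePrimorial d R).Coprime p :=
  Nat.Coprime.prod_left fun q hq => by
    obtain ⟨hqR, hprime⟩ := Nat.mem_primesLE.1 (mem_of_mem_filter q hq)
    exact (Nat.coprime_primes hprime hp).2 (hqR.trans_lt hpR).ne

/-- The sieve problem of removing from the progression `a` mod `d` in `(0, N]` all multiples of the
primes up to `R` that do not divide `d`. -/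
noncomputable def progressionSieve (d R a N : ℕ) : BoundingSieve where
  support := {n ∈ Ioc 0 N | n ≡ a [MOD d]}
  prodPrimes := coprimePrimorial d R
  prodPrimes_squarefree := squarefree_coprimePrimorial d R
  weights _ := 1
  weights_nonneg _ := zero_le_one
  totalMass := N / d
  nu := reciprocal
  nu_mult := isMultiplicative_reciprocal
  nu_pos_of_prime p hp _ := by
    have := hp.pos
    rw [reciprocal_apply]
    positivity
  nu_lt_one_of_prime p hp _ := by
    rw [reciprocal_apply]
    exact inv_lt_one_of_one_lt₀ (mod_cast hp.one_lt)

lemma abs_rem_progressionSieve_le {d e : ℕ} (hd : 0 < d) (R a N : ℕ)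
    (he : e ∣ coprimePrimorial d R) : |(progressionSieve d R a N).rem e| ≤ 1 := by
  have hpos : 0 < e := Nat.pos_of_dvd_of_pos he (squarefree_coprimePrimorial d R).ne_zero.bot_lt
  have hrem : (progressionSieve d R a N).rem e =
      #{n ∈ Ioc 0 N | n ≡ a [MOD d] ∧ e ∣ n} - (N : ℝ) / (d * e) := by
    have hmult : (progressionSieve d R a N).multSum e =
        #{n ∈ Ioc 0 N | n ≡ a [MOD d] ∧ e ∣ n} := by
      rw [← filter_filter, ← sum_boole]
      rfl
    rw [BoundingSieve.rem, hmult, div_mul_eq_div_div_swap, div_right_comm, div_eq_inv_mul]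
    rfl
  rw [hrem]
  exact abs_card_Ioc_filter_modEq_and_dvd_sub_le hd hpos
    ((coprime_coprimePrimorial d R).coprime_dvd_right he) N a

/-- The squarefree integers in `[1, R]` that are coprime to `d`: the support of the Selberg
weights for a progression mod `d`. -/
noncomputable def coprimeSquarefree (d R : ℕ) : Finset ℕ :=
  {m ∈ Ioc 0 R | Squarefree m ∧ m.Coprime d}

lemma mem_coprimeSquarefree {d R m : ℕ} :
    m ∈ coprimeSquarefree d R ↔ m ≤ R ∧ Squarefree m ∧ m.Coprime d := by
  simp only [coprimeSquarefree, mem_filter, mem_Ioc]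
  exact ⟨fun h => ⟨h.1.2, h.2⟩, fun h => ⟨⟨h.2.1.ne_zero.bot_lt, h.1⟩, h.2⟩⟩

lemma card_coprimeSquarefree_le (d R : ℕ) : #(coprimeSquarefree d R) ≤ R :=
  (card_filter_le _ _).trans_eq (by simp)

lemma one_mem_coprimeSquarefree (d : ℕ) {R : ℕ} (hR : 0 < R) : 1 ∈ coprimeSquarefree d R :=
  mem_coprimeSquarefree.2 ⟨hR, squarefree_one, d.coprime_one_left⟩

lemma mem_coprimeSquarefree_of_dvd {d R m e : ℕ} (hm : m ∈ coprimeSquarefree d R) (he : e ∣ m) :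
    e ∈ coprimeSquarefree d R := by
  obtain ⟨hmR, hsq, hcop⟩ := mem_coprimeSquarefree.1 hm
  exact mem_coprimeSquarefree.2 ⟨(Nat.le_of_dvd hsq.ne_zero.bot_lt he).trans hmR,
    hsq.squarefree_of_dvd he, hcop.coprime_dvd_left he⟩

lemma coprimeSquarefree_subset_divisors (d R : ℕ) :
    coprimeSquarefree d R ⊆ (coprimePrimorial d R).divisors := fun m hm => by
  obtain ⟨hmR, hsq, hcop⟩ := mem_coprimeSquarefree.1 hm
  exact Nat.mem_divisors.2
    ⟨dvd_coprimePrimorial hsq hcop hmR, (squarefree_coprimePrimorial d R).ne_zero⟩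

lemma sum_inv_coprimeSquarefree_pos (d : ℕ) {R : ℕ} (hR : 0 < R) :
    0 < ∑ m ∈ coprimeSquarefree d R, (m : ℝ)⁻¹ :=
  sum_pos (fun m hm => by
    have := Nat.pos_of_ne_zero (mem_coprimeSquarefree.1 hm).2.1.ne_zero
    positivity) ⟨1, one_mem_coprimeSquarefree d hR⟩

lemma inv_nu_mul_abs_rem_progressionSieve_le {d R u v : ℕ} (hd : 0 < d) (a N : ℕ)
    (hu : u ∈ coprimeSquarefree d R) (hv : v ∈ coprimeSquarefree d R) :
    ((progressionSieve d R a N).nu u)⁻¹ * ((progressionSieve d R a N).nu v)⁻¹ *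
      |(progressionSieve d R a N).rem (u.lcm v)| ≤ (R : ℝ) ^ 2 := by
  have hsub := coprimeSquarefree_subset_divisors d R
  have hrem := abs_rem_progressionSieve_le hd R a N
    (Nat.lcm_dvd (Nat.dvd_of_mem_divisors (hsub hu)) (Nat.dvd_of_mem_divisors (hsub hv)))
  have huR : (u : ℝ) ≤ R := mod_cast (mem_coprimeSquarefree.1 hu).1
  have hvR : (v : ℝ) ≤ R := mod_cast (mem_coprimeSquarefree.1 hv).1
  have hnu : ∀ n, ((progressionSieve d R a N).nu n)⁻¹ = n := fun n => inv_inv _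
  rw [hnu, hnu]
  calc _ ≤ (R : ℝ) * R * 1 := by gcongr
    _ = (R : ℝ) ^ 2 := by ring

lemma siftedSum_progressionSieve_le {d R : ℕ} (hd : 0 < d) (hR : 0 < R) (a N : ℕ) :
    (progressionSieve d R a N).siftedSum ≤
      N / d / ∑ m ∈ coprimeSquarefree d R, (m : ℝ)⁻¹ + R ^ 4 := by
  have hsub : coprimeSquarefree d R ⊆ (progressionSieve d R a N).prodPrimes.divisors :=
    coprimeSquarefree_subset_divisors d R
  have hcard : (#(coprimeSquarefree d R) : ℝ) ≤ R := mod_cast card_coprimeSquarefree_le d R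
  have hmain : ∑ m ∈ coprimeSquarefree d R, (m : ℝ)⁻¹ ≤
      ∑ m ∈ coprimeSquarefree d R, (progressionSieve d R a N).selbergTerms m :=
    sum_le_sum fun m hm => nu_le_selbergTerms (Nat.dvd_of_mem_divisors (hsub hm))
  calc (progressionSieve d R a N).siftedSum
      ≤ N / d / ∑ m ∈ coprimeSquarefree d R, (progressionSieve d R a N).selbergTerms m +
          ∑ u ∈ coprimeSquarefree d R, ∑ v ∈ coprimeSquarefree d R,
            ((progressionSieve d R a N).nu u)⁻¹ * ((progressionSieve d R a N).nu v)⁻¹ *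
              |(progressionSieve d R a N).rem (u.lcm v)| :=
        siftedSum_le_totalMass_div_sum_selbergTerms hsub ⟨1, one_mem_coprimeSquarefree d hR⟩
          fun _ hk _ => mem_coprimeSquarefree_of_dvd hk
    _ ≤ N / d / ∑ m ∈ coprimeSquarefree d R, (m : ℝ)⁻¹ +
          ∑ _u ∈ coprimeSquarefree d R, ∑ _v ∈ coprimeSquarefree d R, (R : ℝ) ^ 2 :=
        add_le_add
          (div_le_div_of_nonneg_left (by positivity) (sum_inv_coprimeSquarefree_pos d hR) hmain)
          (sum_le_sum fun u hu => sum_le_sum fun v hv =>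
            inv_nu_mul_abs_rem_progressionSieve_le hd a N hu hv)
    _ = N / d / ∑ m ∈ coprimeSquarefree d R, (m : ℝ)⁻¹ +
          #(coprimeSquarefree d R) * (#(coprimeSquarefree d R) * (R : ℝ) ^ 2) := by
        simp only [sum_const, nsmul_eq_mul]
    _ ≤ N / d / ∑ m ∈ coprimeSquarefree d R, (m : ℝ)⁻¹ + R * (R * (R : ℝ) ^ 2) := by gcongr
    _ = _ := by ring

lemma card_primesLE_filter_modEq_le {d R : ℕ} (hd : 0 < d) (hR : 0 < R) (a N : ℕ) :
    (#{p ∈ N.primesLE | p ≡ a [MOD d]} : ℝ) ≤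
      N / d / ∑ m ∈ coprimeSquarefree d R, (m : ℝ)⁻¹ + R ^ 4 + R := by
  have hsifted : (progressionSieve d R a N).siftedSum =
      #{n ∈ Ioc 0 N | n ≡ a [MOD d] ∧ (coprimePrimorial d R).Coprime n} := by
    rw [← filter_filter, ← sum_boole]
    rfl
  have hsub : {p ∈ N.primesLE | p ≡ a [MOD d]} ⊆
      {n ∈ Ioc 0 N | n ≡ a [MOD d] ∧ (coprimePrimorial d R).Coprime n} ∪ Ioc 0 R := by
    intro p hp
    obtain ⟨hmem, hpa⟩ := mem_filter.1 hp
    obtain ⟨hpN, hprime⟩ := Nat.mem_primesLE.1 hmem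
    rcases le_or_gt p R with hpR | hpR
    · exact mem_union_right _ (mem_Ioc.2 ⟨hprime.pos, hpR⟩)
    · exact mem_union_left _ (mem_filter.2 ⟨mem_Ioc.2 ⟨hprime.pos, hpN⟩, hpa,
        coprimePrimorial_coprime_of_prime hprime hpR⟩)
  calc (#{p ∈ N.primesLE | p ≡ a [MOD d]} : ℝ)
      ≤ #{n ∈ Ioc 0 N | n ≡ a [MOD d] ∧ (coprimePrimorial d R).Coprime n} + #(Ioc 0 R) :=
        mod_cast (card_le_card hsub).trans (card_union_le _ _)
    _ ≤ _ := by
        rw [← hsifted, Nat.card_Ioc, tsub_zero]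
        gcongr
        exact siftedSum_progressionSieve_le hd hR a N

lemma exists_dvd_mul_coprime_eq_of_squarefree {q : ℕ} (hq : Squarefree q) (d : ℕ) :
    ∃ l m, l ∣ d ∧ m.Coprime d ∧ l * m = q := by
  obtain ⟨m, hm⟩ := Nat.gcd_dvd_left q d
  refine ⟨q.gcd d, m, Nat.gcd_dvd_right q d, ?_, hm.symm⟩
  have hcop : (q.gcd d).Coprime m := Nat.coprime_of_squarefree_mul (hm ▸ hq)
  have hdvd : m.gcd d ∣ q.gcd d := Nat.gcd_dvd_gcd_of_dvd_left d ⟨q.gcd d, by rw [mul_comm, ← hm]⟩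
  exact Nat.eq_one_of_dvd_coprimes hcop hdvd (Nat.gcd_dvd_left m d)

lemma exists_eq_mul_sq_mul_coprimeSquarefree {n d R : ℕ} (hn : 0 < n) (hnR : n ≤ R) (hd : 0 < d) :
    ∃ l ∈ d.divisors, ∃ s ∈ Ioo 0 (R + 1), ∃ m ∈ coprimeSquarefree d R, l * (s ^ 2 * m) = n := by
  obtain ⟨q, s, rfl, hq⟩ := n.sq_mul_squarefree
  obtain ⟨l, m, hld, hmd, rfl⟩ := exists_dvd_mul_coprime_eq_of_squarefree hq d
  have hs : s ≠ 0 := by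
    rintro rfl
    simp at hn
  have hsR : s ≤ R := ((Nat.le_self_pow two_ne_zero s).trans
    (Nat.le_of_dvd hn (dvd_mul_right _ _))).trans hnR
  have hmR : m ≤ R := (Nat.le_of_dvd hn ((dvd_mul_left m l).mul_left _)).trans hnR
  exact ⟨l, Nat.mem_divisors.2 ⟨hld, hd.ne'⟩, s, mem_Ioo.2 ⟨hs.bot_lt, Nat.lt_succ_of_le hsR⟩, m,
    mem_coprimeSquarefree.2 ⟨hmR, hq.squarefree_of_dvd (dvd_mul_left m l), hmd⟩, by ring⟩

lemma sum_inv_le_mul_sum_inv_coprimeSquarefree {d : ℕ} (hd : 0 < d) (R : ℕ) :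
    ∑ n ∈ Ioc 0 R, (n : ℝ)⁻¹ ≤
      2 * (∑ l ∈ d.divisors, (l : ℝ)⁻¹) * ∑ m ∈ coprimeSquarefree d R, (m : ℝ)⁻¹ := by
  let T : Finset (ℕ × ℕ × ℕ) := d.divisors ×ˢ Ioo 0 (R + 1) ×ˢ coprimeSquarefree d R
  let f : ℕ × ℕ × ℕ → ℕ := fun t => t.1 * (t.2.1 ^ 2 * t.2.2)
  have hsq : ∑ s ∈ Ioo 0 (R + 1), ((s : ℝ) ^ 2)⁻¹ ≤ 2 :=
    (sum_Ioo_inv_sq_le (α := ℝ) 0 (R + 1)).trans_eq (by norm_num)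
  have hsub : Ioc 0 R ⊆ T.image f := by
    intro n hn
    obtain ⟨hn, hnR⟩ := mem_Ioc.1 hn
    obtain ⟨l, hl, s, hs, m, hm, rfl⟩ := exists_eq_mul_sq_mul_coprimeSquarefree hn hnR hd
    exact mem_image.2 ⟨(l, s, m), mem_product.2 ⟨hl, mem_product.2 ⟨hs, hm⟩⟩, rfl⟩
  calc ∑ n ∈ Ioc 0 R, (n : ℝ)⁻¹
      ≤ ∑ n ∈ T.image f, (n : ℝ)⁻¹ :=
        sum_le_sum_of_subset_of_nonneg hsub fun _ _ _ => by positivity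
    _ ≤ ∑ t ∈ T, (f t : ℝ)⁻¹ :=
        sum_image_le_of_nonneg fun _ _ => by positivity
    _ = (∑ s ∈ Ioo 0 (R + 1), ((s : ℝ) ^ 2)⁻¹) * (∑ l ∈ d.divisors, (l : ℝ)⁻¹) *
          ∑ m ∈ coprimeSquarefree d R, (m : ℝ)⁻¹ := by
        simp only [T, f, sum_product, Nat.cast_mul, Nat.cast_pow, mul_inv, ← mul_sum, ← sum_mul]
        ring
    _ ≤ _ := by gcongr

lemma log_add_one_le_sum_inv (R : ℕ) : Real.log (R + 1) ≤ ∑ n ∈ Ioc 0 R, (n : ℝ)⁻¹ := by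
  have h := log_add_one_le_harmonic R
  rw [harmonic_eq_sum_Icc] at h
  push_cast at h
  exact h

lemma sum_inv_le_one_add_log (R : ℕ) : ∑ n ∈ Ioc 0 R, (n : ℝ)⁻¹ ≤ 1 + Real.log R := by
  have h := harmonic_le_one_add_log R
  rw [harmonic_eq_sum_Icc] at h
  push_cast at h
  exact h

theorem card_primesLE_filter_modEq_le_div_log {d R : ℕ} (hd : 0 < d) (hR : 0 < R) (a N : ℕ) :
    (#{p ∈ N.primesLE | p ≡ a [MOD d]} : ℝ) ≤
      2 * N / Real.log (R + 1) * ((d : ℝ)⁻¹ * ∑ l ∈ d.divisors, (l : ℝ)⁻¹) + 2 * R ^ 4 := by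
  have hlog : 0 < Real.log (R + 1) := Real.log_pos (by simpa using hR)
  have hsum := sum_inv_coprimeSquarefree_pos d hR
  have hinv : (∑ m ∈ coprimeSquarefree d R, (m : ℝ)⁻¹)⁻¹ ≤
      2 * (∑ l ∈ d.divisors, (l : ℝ)⁻¹) / Real.log (R + 1) := by
    rw [le_div_iff₀ hlog, inv_mul_le_iff₀' hsum]
    exact (log_add_one_le_sum_inv R).trans (sum_inv_le_mul_sum_inv_coprimeSquarefree hd R)
  have hpow : (R : ℝ) ≤ R ^ 4 := mod_cast Nat.le_self_pow four_ne_zero R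
  calc (#{p ∈ N.primesLE | p ≡ a [MOD d]} : ℝ)
      ≤ N / d * (∑ m ∈ coprimeSquarefree d R, (m : ℝ)⁻¹)⁻¹ + R ^ 4 + R := by
        rw [← div_eq_mul_inv]
        exact card_primesLE_filter_modEq_le hd hR a N
    _ ≤ N / d * (2 * (∑ l ∈ d.divisors, (l : ℝ)⁻¹) / Real.log (R + 1)) + R ^ 4 + R ^ 4 := by
        gcongr
    _ = _ := by ring

/-! ### The Titchmarsh divisor sum -/

lemma reciprocal_mul_apply (f : ArithmeticFunction ℝ) (d : ℕ) :
    (f * reciprocal) d = (d : ℝ)⁻¹ * ∑ l ∈ d.divisors, f l * l := by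
  rw [ArithmeticFunction.mul_apply, Nat.sum_divisorsAntidiagonal fun l m => f l * reciprocal m,
    mul_sum]
  refine sum_congr rfl fun l hl => ?_
  have hl0 : (l : ℝ) ≠ 0 := mod_cast (Nat.pos_of_mem_divisors hl).ne'
  rw [reciprocal_apply, Nat.cast_div (Nat.dvd_of_mem_divisors hl) hl0]
  field_simp

lemma sum_inv_mul_sum_divisors_inv_le (Y : ℕ) :
    ∑ d ∈ Ioc 0 Y, (d : ℝ)⁻¹ * ∑ l ∈ d.divisors, (l : ℝ)⁻¹ ≤ 2 * (1 + Real.log Y) := by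
  have hconv : ∀ d ∈ Ioc 0 Y, (d : ℝ)⁻¹ * ∑ l ∈ d.divisors, (l : ℝ)⁻¹ =
      (reciprocal.pmul reciprocal * reciprocal) d := by
    intro d _
    rw [reciprocal_mul_apply]
    congr! 2 with l
    simpa [reciprocal_apply] using (mul_self_mul_inv (l : ℝ)⁻¹).symm
  have hinner : ∀ l ∈ Ioc 0 Y, ∑ m ∈ Ioc 0 (Y / l), reciprocal m ≤ 1 + Real.log Y := by
    intro l _
    have hdiv : Y / l ≤ Y := Nat.div_le_self Y l
    refine (sum_le_sum_of_subset_of_nonneg (Ioc_subset_Ioc_right hdiv) fun m _ _ => ?_).trans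
      (sum_inv_le_one_add_log Y)
    exact inv_nonneg.2 m.cast_nonneg
  have hsq : ∑ l ∈ Ioc 0 Y, (reciprocal.pmul reciprocal) l ≤ 2 := by
    refine le_trans (le_of_eq ?_) ((sum_Ioo_inv_sq_le (α := ℝ) 0 (Y + 1)).trans_eq (by norm_num))
    refine sum_congr rfl fun l _ => ?_
    simp [reciprocal_apply, sq]
  rw [sum_congr rfl hconv, ArithmeticFunction.sum_Ioc_mul_eq_sum_sum]
  calc _ ≤ ∑ l ∈ Ioc 0 Y, (reciprocal.pmul reciprocal) l * (1 + Real.log Y) := by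
        refine sum_le_sum fun l hl => mul_le_mul_of_nonneg_left (hinner l hl) ?_
        exact mul_self_nonneg (reciprocal l)
    _ ≤ 2 * (1 + Real.log Y) := by
        rw [← sum_mul]
        have := Real.log_natCast_nonneg Y
        gcongr

lemma card_divisors_le_two_mul_card_filter_le_sqrt (n : ℕ) :
    #n.divisors ≤ 2 * #{e ∈ n.divisors | e ≤ n.sqrt} := by
  have hsub : n.divisors ⊆
      {e ∈ n.divisors | e ≤ n.sqrt} ∪ image (n / ·) {e ∈ n.divisors | e ≤ n.sqrt} := by
    intro e he
    obtain ⟨hen, hn⟩ := Nat.mem_divisors.1 he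
    rcases le_or_gt e n.sqrt with hle | hlt
    · exact mem_union_left _ (mem_filter.2 ⟨he, hle⟩)
    · have hdiv : n / e ≤ n.sqrt := by
        refine Nat.lt_succ_iff.1 (Nat.div_lt_of_lt_mul ((Nat.lt_succ_sqrt n).trans_le ?_))
        gcongr
        exact hlt
      exact mem_union_right _ (mem_image.2 ⟨n / e,
        mem_filter.2 ⟨Nat.mem_divisors.2 ⟨Nat.div_dvd_of_dvd hen, hn⟩, hdiv⟩,
        Nat.div_div_self hen hn⟩)
  calc #n.divisors ≤ #{e ∈ n.divisors | e ≤ n.sqrt} +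
        #(image (n / ·) {e ∈ n.divisors | e ≤ n.sqrt}) :=
        (card_le_card hsub).trans (card_union_le _ _)
    _ ≤ 2 * #{e ∈ n.divisors | e ≤ n.sqrt} := by
        rw [two_mul]
        exact Nat.add_le_add_left card_image_le _

lemma sum_primesLE_card_divisors_sub_one_le (M : ℕ) :
    ∑ p ∈ M.primesLE, #(p - 1).divisors ≤
      2 * ∑ d ∈ Ioc 0 M.sqrt, #{p ∈ M.primesLE | p ≡ 1 [MOD d]} := by
  have hsmall : ∀ p ∈ M.primesLE,
      #(p - 1).divisors ≤ 2 * #{d ∈ Ioc 0 M.sqrt | p ≡ 1 [MOD d]} := by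
    intro p hp
    obtain ⟨hpM, hprime⟩ := Nat.mem_primesLE.1 hp
    refine (card_divisors_le_two_mul_card_filter_le_sqrt _).trans ?_
    refine Nat.mul_le_mul_left 2 (card_le_card fun d hd => ?_)
    obtain ⟨hd, hds⟩ := mem_filter.1 hd
    refine mem_filter.2 ⟨mem_Ioc.2 ⟨Nat.pos_of_mem_divisors hd,
      hds.trans (Nat.sqrt_le_sqrt ((Nat.sub_le p 1).trans hpM))⟩, ?_⟩
    exact ((Nat.modEq_iff_dvd' hprime.one_le).2 (Nat.dvd_of_mem_divisors hd)).symm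
  calc ∑ p ∈ M.primesLE, #(p - 1).divisors
      ≤ ∑ p ∈ M.primesLE, 2 * #{d ∈ Ioc 0 M.sqrt | p ≡ 1 [MOD d]} := sum_le_sum hsmall
    _ = 2 * ∑ d ∈ Ioc 0 M.sqrt, #{p ∈ M.primesLE | p ≡ 1 [MOD d]} := by
        rw [← mul_sum]
        exact congrArg (2 * ·)
          (sum_card_bipartiteAbove_eq_sum_card_bipartiteBelow fun p d => p ≡ 1 [MOD d])

lemma sum_primesLE_card_divisors_sub_one_le_div_log {R : ℕ} (hR : 0 < R) (M : ℕ) :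
    (∑ p ∈ M.primesLE, #(p - 1).divisors : ℝ) ≤
      8 * M * (1 + Real.log M.sqrt) / Real.log (R + 1) + 4 * M.sqrt * R ^ 4 := by
  have hlog : 0 < Real.log (R + 1) := Real.log_pos (by simpa using hR)
  calc (∑ p ∈ M.primesLE, #(p - 1).divisors : ℝ)
      ≤ 2 * ∑ d ∈ Ioc 0 M.sqrt, (#{p ∈ M.primesLE | p ≡ 1 [MOD d]} : ℝ) :=
        mod_cast sum_primesLE_card_divisors_sub_one_le M
    _ ≤ 2 * ∑ d ∈ Ioc 0 M.sqrt, (2 * M / Real.log (R + 1) *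
          ((d : ℝ)⁻¹ * ∑ l ∈ d.divisors, (l : ℝ)⁻¹) + 2 * R ^ 4) := by
        gcongr with d hd
        exact card_primesLE_filter_modEq_le_div_log (mem_Ioc.1 hd).1 hR 1 M
    _ = 2 * (2 * M / Real.log (R + 1) *
          (∑ d ∈ Ioc 0 M.sqrt, (d : ℝ)⁻¹ * ∑ l ∈ d.divisors, (l : ℝ)⁻¹) +
            M.sqrt * (2 * R ^ 4)) := by
        simp [sum_add_distrib, mul_sum]
    _ ≤ 2 * (2 * M / Real.log (R + 1) * (2 * (1 + Real.log M.sqrt)) + M.sqrt * (2 * R ^ 4)) := by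
        gcongr
        exact sum_inv_mul_sum_divisors_inv_le _
    _ = _ := by ring

theorem sum_primesLE_floor_card_divisors_sub_one_le {X : ℝ} (hX : Real.exp 1 ≤ X) :
    (∑ p ∈ ⌊X⌋₊.primesLE, #(p - 1).divisors : ℝ) ≤ 100 * X := by
  have hX0 : 0 < X := (Real.exp_pos 1).trans_le hX
  have hX1 : 1 ≤ X := (Real.one_le_exp zero_le_one).trans hX
  have hlog : 1 ≤ Real.log X := (Real.le_log_iff_exp_le hX0).2 hX
  set M := ⌊X⌋₊
  -- The sieve error is `O(R ^ 4)` for each of the `√X` moduli, so this level makes it `O(X)`.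
  set R := ⌊X ^ (1 / 8 : ℝ)⌋₊
  have hR : 0 < R := Nat.floor_pos.2 (Real.one_le_rpow hX1 (by norm_num))
  have hMX : (M : ℝ) ≤ X := Nat.floor_le hX0.le
  have hM : 0 < M := Nat.floor_pos.2 hX1
  have hsqrt : (M.sqrt : ℝ) ≤ √X := Real.nat_sqrt_le_real_sqrt.trans (Real.sqrt_le_sqrt hMX)
  have hlogsqrt : Real.log M.sqrt ≤ Real.log X / 2 := by
    rw [← Real.log_sqrt hX0.le]
    exact Real.log_le_log (mod_cast Nat.sqrt_pos.2 hM) hsqrt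
  have hlogR : Real.log X / 8 ≤ Real.log (R + 1) :=
    calc Real.log X / 8 = Real.log (X ^ (1 / 8 : ℝ)) := by rw [Real.log_rpow hX0]; ring
      _ ≤ Real.log (R + 1) := Real.log_le_log (by positivity) (Nat.lt_floor_add_one _).le
  have hR4 : (R : ℝ) ^ 4 ≤ √X :=
    calc (R : ℝ) ^ 4 ≤ (X ^ (1 / 8 : ℝ)) ^ 4 := by
          gcongr
          exact Nat.floor_le (by positivity)
      _ = √X := by
          rw [← Real.rpow_mul_natCast hX0.le, Real.sqrt_eq_rpow]
          norm_num
  calc (∑ p ∈ M.primesLE, #(p - 1).divisors : ℝ)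
      ≤ 8 * M * (1 + Real.log M.sqrt) / Real.log (R + 1) + 4 * M.sqrt * R ^ 4 :=
        sum_primesLE_card_divisors_sub_one_le_div_log hR M
    _ ≤ 8 * X * (Real.log X + Real.log X / 2) / (Real.log X / 8) + 4 * √X * √X := by
        gcongr
    _ = 96 * X + 4 * (√X * √X) := by
        field_simp
        ring
    _ = 100 * X := by
        rw [Real.mul_self_sqrt hX0.le]
        ring

lemma eventually_le_four_mul_primeCounting_mul_log :
    ∀ᶠ X : ℝ in Filter.atTop, X ≤ 4 * Nat.primeCounting ⌊X⌋₊ * Real.log X := by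
  have hlog : ∀ᶠ X : ℝ in Filter.atTop, Real.log (X + 2) ≤ 1 / 16 * (X + 2) := by
    have hlittle := (Filter.tendsto_atTop_add_const_right Filter.atTop (2 : ℝ)
      Filter.tendsto_id).eventually (Real.isLittleO_log_id_atTop.def (c := 1 / 16) (by norm_num))
    filter_upwards [hlittle, Filter.eventually_ge_atTop 0] with X hX hX0
    simpa [abs_of_nonneg (show 0 ≤ X + 2 by linarith)] using (le_abs_self _).trans hX
  filter_upwards [hlog, Filter.eventually_ge_atTop 100] with X hX hX100
  have hpi := Chebyshev.pi_ge' (x := X) (by linarith)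
  rw [div_le_iff₀ (Real.log_pos (by linarith))] at hpi
  have hlog2 : 1 / 2 * (X - 1) ≤ (X - 1) * Real.log 2 := by
    nlinarith [Real.log_two_gt_d9]
  linarith

lemma card_filter_le_nsmul_le_sum {ι M : Type*} [AddCommMonoid M] [PartialOrder M]
    [IsOrderedAddMonoid M] [DecidableLE M] {s : Finset ι} {f : ι → M} (hf : ∀ i ∈ s, 0 ≤ f i)
    (t : M) : #{i ∈ s | t ≤ f i} • t ≤ ∑ i ∈ s, f i :=
  calc #{i ∈ s | t ≤ f i} • t ≤ ∑ i ∈ s with t ≤ f i, f i :=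
        card_nsmul_le_sum _ _ _ fun _ hi => (mem_filter.1 hi).2
    _ ≤ ∑ i ∈ s, f i := sum_le_sum_of_subset_of_nonneg (filter_subset _ _) fun i hi _ => hf i hi

theorem stmt14 (ε : ℝ) (hε : 0 < ε) :
    ∃ C : ℝ, 0 < C ∧ ∃ X₀ : ℝ, ∀ X : ℝ, X₀ ≤ X →
      (((Finset.range (⌊X⌋₊ + 1)).filter
          (fun p => p.Prime ∧
            Real.log X ^ (1 + ε/2) ≤ ((p - 1).divisors.card : ℝ))).card : ℝ)
        ≤ C * (((Finset.range (⌊X⌋₊ + 1)).filter Nat.Prime).card : ℝ)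
            * Real.log X ^ (-(ε/2)) := by
  obtain ⟨X₀, hcheb⟩ := Filter.eventually_atTop.1 eventually_le_four_mul_primeCounting_mul_log
  refine ⟨400, by norm_num, max X₀ (Real.exp 1), fun X hX => ?_⟩
  obtain ⟨hX₀, hXe⟩ := max_le_iff.1 hX
  have hlog : 0 < Real.log X :=
    zero_lt_one.trans_le ((Real.le_log_iff_exp_le ((Real.exp_pos 1).trans_le hXe)).2 hXe)
  set L := Real.log X
  rw [← filter_filter, ← Nat.primesLE_eq_filter_range, Nat.primesLE_card_eq_primeCounting]
  have hpow : L ^ (-(ε / 2)) * L ^ (1 + ε / 2) = L := by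
    rw [← Real.rpow_add hlog, neg_add_cancel_comm_assoc, Real.rpow_one]
  refine le_of_mul_le_mul_right ?_ (Real.rpow_pos_of_pos hlog (1 + ε / 2))
  calc (#{p ∈ ⌊X⌋₊.primesLE | L ^ (1 + ε / 2) ≤ (#(p - 1).divisors : ℝ)} : ℝ) * L ^ (1 + ε / 2)
      ≤ ∑ p ∈ ⌊X⌋₊.primesLE, (#(p - 1).divisors : ℝ) :=
        (nsmul_eq_mul _ _).symm.trans_le
          (card_filter_le_nsmul_le_sum (fun _ _ => Nat.cast_nonneg _) _)
    _ ≤ 100 * X := sum_primesLE_floor_card_divisors_sub_one_le hXe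
    _ ≤ 100 * (4 * Nat.primeCounting ⌊X⌋₊ * L) := by gcongr; exact hcheb X hX₀
    _ = 400 * Nat.primeCounting ⌊X⌋₊ * L ^ (-(ε / 2)) * L ^ (1 + ε / 2) := by
        rw [mul_assoc _ (L ^ (-(ε / 2))), hpow]
        ring
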